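/- arXiv:1612.02905 — 2 statements merged into one kernel-verified Lean document; each statement's English description precedes it below -/
import Mathlib

section
/- Let ε > 0, let u = (0, 0, aε) and v = (0, 0, −aε), and let 0 < y₀ ≤ 1. Then every C¹ path γ : [0,1] → ℝ³ from v to u whose second coordinate satisfies |γ₂(t)| ≤ y₀ for all t has g-length L_g(γ) ≥ 2aε√(1 + f(y₀)). -/
open Real MeasureTheory

noncomputable section

/-- `ℝ³` with the Euclidean norm. -/
abbrev E3 : Type := EuclideanSpace ℝ (Fin 3)

/-- The bump function `f(y) = A (1 + cos (π y))`. -/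
def f (A y : ℝ) : ℝ := A * (1 + Real.cos (Real.pi * y))

/-- The g-length of a path `γ` in the perturbed metric:
`L_g(γ) = ∫₀¹ √(γ₁′(t)² + γ₂′(t)² + (1 + f(γ₂(t))) γ₃′(t)²) dt`. -/
def Lg (A : ℝ) (γ : ℝ → E3) : ℝ :=
  ∫ t in (0:ℝ)..1,
    Real.sqrt ((deriv γ t 0) ^ 2 + (deriv γ t 1) ^ 2
      + (1 + f A (γ t 1)) * (deriv γ t 2) ^ 2)

/-- The geodesic distance: the infimum of g-lengths of C¹ paths from `p` to `q`. -/
def dg (A : ℝ) (p q : E3) : ℝ :=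
  sInf {L : ℝ | ∃ γ : ℝ → E3,
    ContDiff ℝ 1 γ ∧ γ 0 = p ∧ γ 1 = q ∧ L = Lg A γ}

/-- A point of `ℝ³` from its three coordinates. -/
def pt (x y z : ℝ) : E3 := (EuclideanSpace.equiv (Fin 3) ℝ).symm ![x, y, z]

/-- `a = 1/√2`. -/
def a : ℝ := 1 / Real.sqrt 2

/-- `ξ₀ = √(1 + f(0)) − 1`. -/
def ξ₀ (A : ℝ) : ℝ := Real.sqrt (1 + f A 0) - 1

/-! For `|y| ≤ y₀ ≤ 1` the metric dominates the flat metric `dx² + dy² + (1 + f(y₀)) dz²`, in which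
speed is at least `√(1 + f(y₀)) |z'|`; integrating, the length is at least `√(1 + f(y₀))` times the
net displacement in `z`. -/

/-- The speed of the path `γ` in the metric `dx² + dy² + w(y) dz²` on `ℝ³`. For `w = 1 + f` it is
the integrand of `Lg`. -/
def warpedSpeed (w : ℝ → ℝ) (γ : ℝ → E3) (t : ℝ) : ℝ :=
  √((deriv γ t 0) ^ 2 + (deriv γ t 1) ^ 2 + w (γ t 1) * (deriv γ t 2) ^ 2)

@[simp]
theorem pt_apply_two (x y z : ℝ) : pt x y z 2 = z := rfl

theorem f_abs (A y : ℝ) : f A |y| = f A y := by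
  rw [f, f, ← Real.cos_abs (π * y), abs_mul, abs_of_pos pi_pos]

theorem antitoneOn_f {A : ℝ} (hA : 0 ≤ A) : AntitoneOn (f A) (Set.Icc 0 1) := by
  intro x hx y hy hxy
  have hcos : cos (π * y) ≤ cos (π * x) :=
    cos_le_cos_of_nonneg_of_le_pi (mul_nonneg pi_nonneg hx.1)
      (mul_le_of_le_one_right pi_nonneg hy.2) (mul_le_mul_of_nonneg_left hxy pi_nonneg)
  exact mul_le_mul_of_nonneg_left (add_le_add_right hcos 1) hA

theorem f_le_f_of_abs_le {A y y₀ : ℝ} (hA : 0 ≤ A) (hy : |y| ≤ y₀) (hy₀ : y₀ ≤ 1) :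
    f A y₀ ≤ f A y := by
  rw [← f_abs A y]
  exact antitoneOn_f hA ⟨abs_nonneg y, hy.trans hy₀⟩ ⟨(abs_nonneg y).trans hy, hy₀⟩ hy

theorem continuous_f (A : ℝ) : Continuous (f A) := by
  unfold f
  fun_prop

theorem continuous_warpedSpeed {w : ℝ → ℝ} (hw : Continuous w) {γ : ℝ → E3}
    (hγ : ContDiff ℝ 1 γ) : Continuous (warpedSpeed w γ) := by
  have hγ_cont : Continuous γ := hγ.continuous
  unfold warpedSpeed
  fun_prop

theorem sqrt_mul_abs_deriv_le_warpedSpeed {w : ℝ → ℝ} {m t : ℝ} {γ : ℝ → E3}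
    (hm : m ≤ w (γ t 1)) : √m * |deriv γ t 2| ≤ warpedSpeed w γ t :=
  calc √m * |deriv γ t 2| = √(m * (deriv γ t 2) ^ 2) := by
        rw [sqrt_mul' m (sq_nonneg _), sqrt_sq_eq_abs]
    _ ≤ warpedSpeed w γ t := sqrt_le_sqrt <|
        (mul_le_mul_of_nonneg_right hm (sq_nonneg _)).trans
          (le_add_of_nonneg_left (add_nonneg (sq_nonneg _) (sq_nonneg _)))

theorem deriv_euclidean_apply {ι : Type*} [Finite ι] {γ : ℝ → EuclideanSpace ℝ ι} {t : ℝ}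
    (hγ : DifferentiableAt ℝ γ t) (i : ι) : deriv (fun s => γ s i) t = deriv γ t i := by
  have := Fintype.ofFinite ι
  exact ((EuclideanSpace.proj (𝕜 := ℝ) i).hasFDerivAt.comp_hasDerivAt t hγ.hasDerivAt).deriv

theorem sqrt_mul_abs_sub_le_integral_warpedSpeed {w : ℝ → ℝ} {m t₀ t₁ : ℝ} {γ : ℝ → E3}
    (hle : t₀ ≤ t₁) (hγ_cont : ContinuousOn γ (Set.Icc t₀ t₁))
    (hγ_diff : DifferentiableOn ℝ γ (Set.Ioo t₀ t₁))
    (hγ_int : IntervalIntegrable (warpedSpeed w γ) volume t₀ t₁)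
    (hm : ∀ t ∈ Set.Ioo t₀ t₁, m ≤ w (γ t 1)) :
    √m * |γ t₁ 2 - γ t₀ 2| ≤ ∫ t in t₀..t₁, warpedSpeed w γ t := by
  let z : ℝ → ℝ := fun t => √m * γ t 2
  have hz_cont : ContinuousOn z (Set.Icc t₀ t₁) := by fun_prop
  have hz_diff : DifferentiableOn ℝ z (Set.Ioo t₀ t₁) :=
    (differentiableOn_euclidean.1 hγ_diff 2).const_mul √m
  have hz_deriv : ∀ t ∈ Set.Ioo t₀ t₁, ‖deriv z t‖ ≤ warpedSpeed w γ t := by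
    intro t ht
    have hγ_at : DifferentiableAt ℝ γ t := hγ_diff.differentiableAt (isOpen_Ioo.mem_nhds ht)
    rw [deriv_const_mul_field, deriv_euclidean_apply hγ_at, norm_mul,
      norm_of_nonneg (sqrt_nonneg m)]
    exact sqrt_mul_abs_deriv_le_warpedSpeed (hm t ht)
  calc √m * |γ t₁ 2 - γ t₀ 2| = ‖z t₁ - z t₀‖ := by
        rw [← mul_sub, norm_mul, norm_of_nonneg (sqrt_nonneg m), norm_eq_abs]
    _ ≤ ∫ t in t₀..t₁, warpedSpeed w γ t :=
        norm_sub_le_integral_of_norm_deriv_le_of_le hle hz_cont hz_diff (.of_forall hz_deriv) hγ_int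

theorem length_lower_bound_in_slab_general {A y₀ : ℝ} (hA : 0 ≤ A) (hy₀ : y₀ ≤ 1) {γ : ℝ → E3}
    (hγ_cont : ContinuousOn γ (Set.Icc 0 1)) (hγ_diff : DifferentiableOn ℝ γ (Set.Ioo 0 1))
    (hγ_int : IntervalIntegrable (warpedSpeed (fun y => 1 + f A y) γ) volume 0 1)
    (hslab : ∀ t ∈ Set.Ioo (0 : ℝ) 1, |γ t 1| ≤ y₀) :
    √(1 + f A y₀) * |γ 1 2 - γ 0 2| ≤ Lg A γ :=
  sqrt_mul_abs_sub_le_integral_warpedSpeed zero_le_one hγ_cont hγ_diff hγ_int fun t ht =>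
    add_le_add_right (f_le_f_of_abs_le hA (hslab t ht) hy₀) 1

/-- Any C¹ path from `v` to `u` staying in the slab `|y| ≤ y₀` has g-length at
least `2aε√(1 + f(y₀))`. -/
theorem length_lower_bound_in_slab (A : ℝ) (hA0 : 0 < A) (hA : A ≤ 3 / 8)
    (ε : ℝ) (hε : 0 < ε) (y₀ : ℝ) (hy₀ : 0 < y₀) (hy₀' : y₀ ≤ 1)
    (γ : ℝ → E3) (hγ : ContDiff ℝ 1 γ)
    (h0 : γ 0 = pt 0 0 (-(a * ε))) (h1 : γ 1 = pt 0 0 (a * ε))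
    (hslab : ∀ t ∈ Set.Icc (0:ℝ) 1, |γ t 1| ≤ y₀) :
    2 * a * ε * Real.sqrt (1 + f A y₀) ≤ Lg A γ := by
  have hγ_int := (continuous_warpedSpeed ((continuous_f A).const_add 1) hγ).intervalIntegrable
    (μ := volume) 0 1
  have hdisp : γ 1 2 - γ 0 2 = 2 * a * ε := by
    rw [h0, h1, pt_apply_two, pt_apply_two]
    ring
  calc 2 * a * ε * √(1 + f A y₀) ≤ √(1 + f A y₀) * |γ 1 2 - γ 0 2| := by
        rw [hdisp, mul_comm]
        exact mul_le_mul_of_nonneg_left (le_abs_self _) (sqrt_nonneg _)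
    _ ≤ Lg A γ := length_lower_bound_in_slab_general hA0.le hy₀' hγ.continuous.continuousOn
        (hγ.differentiable one_ne_zero).differentiableOn hγ_int
        fun t ht => hslab t (Set.Ioo_subset_Icc_self ht)
end
end

section
/- Let ε > 0, let u = (0, 0, aε) and v = (0, 0, −aε), and let 0 < y₀ ≤ 1. Then d_g(v, u) ≥ min(2aε√(1 + f(y₀)), 2y₀): every path joining v and u either stays in the slab |y| ≤ y₀, in which case its g-length is at least 2aε√(1 + f(y₀)), or it leaves the slab, in which case its g-length is at least 2y₀. -/
open Real MeasureTheory

noncomputable section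

/-!
Since `f` is even and decreasing on `[0, 1]`, inside the slab `|y| ≤ y₀ ≤ 1` the metric stretches
the third direction by at least `√(1 + f(y₀))`, so a path that stays there pays at least that factor
times its displacement in `z`. A path that leaves the slab has to climb to height `y₀` and come
back, and its `g`-length dominates the total variation of its second coordinate since `f ≥ 0`.
-/

lemma norm_map_sub_le_integral_of_norm_map_deriv_le
    {E F : Type*} [NormedAddCommGroup E] [NormedSpace ℝ E] [NormedAddCommGroup F] [NormedSpace ℝ F]
    (ℓ : E →L[ℝ] F) {γ : ℝ → E} (hγ : Differentiable ℝ γ) {B : ℝ → ℝ} {s t : ℝ} (hst : s ≤ t)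
    (hB : IntervalIntegrable B volume s t) (hle : ∀ τ ∈ Set.Ioo s t, ‖ℓ (deriv γ τ)‖ ≤ B τ) :
    ‖ℓ (γ t) - ℓ (γ s)‖ ≤ ∫ τ in s..t, B τ := by
  have hderiv (τ : ℝ) : deriv (ℓ ∘ γ) τ = ℓ (deriv γ τ) :=
    (ℓ.hasFDerivAt.comp_hasDerivAt τ (hγ τ).hasDerivAt).deriv
  have hdiff : Differentiable ℝ (ℓ ∘ γ) := ℓ.differentiable.comp hγ
  refine norm_sub_le_integral_of_norm_deriv_le_of_le hst hdiff.continuous.continuousOn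
    hdiff.differentiableOn (.of_forall fun τ hτ ↦ ?_) hB
  rw [hderiv]
  exact hle τ hτ

section

variable {A : ℝ} {γ : ℝ → E3}

lemma f_nonneg (hA : 0 ≤ A) (y : ℝ) : 0 ≤ f A y :=
  mul_nonneg hA (by linarith [neg_one_le_cos (π * y)])

lemma f_le_f_of_abs_le_s4 (hA : 0 ≤ A) {y z : ℝ} (hyz : |y| ≤ z) (hz : z ≤ 1) : f A z ≤ f A y := by
  have hcos : cos (π * z) ≤ cos (π * y) := by
    rw [← cos_abs (π * y), abs_mul, abs_of_pos pi_pos]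
    exact cos_le_cos_of_nonneg_of_le_pi (by positivity)
      (mul_le_of_le_one_right pi_pos.le hz) (mul_le_mul_of_nonneg_left hyz pi_pos.le)
  exact mul_le_mul_of_nonneg_left (by linarith) hA

/-- The norm of the tangent vector `v` at the point `p` for the metric `g`; `Lg` is the integral of
the `gNorm` of the velocity. -/
def gNorm (A : ℝ) (p v : E3) : ℝ :=
  √((v 0) ^ 2 + (v 1) ^ 2 + (1 + f A (p 1)) * (v 2) ^ 2)

lemma Lg_eq_integral_gNorm (A : ℝ) (γ : ℝ → E3) :
    Lg A γ = ∫ t in (0 : ℝ)..1, gNorm A (γ t) (deriv γ t) := rfl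

lemma continuous_gNorm (A : ℝ) : Continuous fun x : E3 × E3 ↦ gNorm A x.1 x.2 := by
  unfold gNorm f
  fun_prop

lemma continuous_gNorm_deriv (A : ℝ) (hγ : ContDiff ℝ 1 γ) :
    Continuous fun t ↦ gNorm A (γ t) (deriv γ t) :=
  (continuous_gNorm A).comp (hγ.continuous.prodMk (hγ.continuous_deriv le_rfl))

lemma abs_apply_one_le_gNorm (hA : 0 ≤ A) (p v : E3) : |v 1| ≤ gNorm A p v := by
  refine abs_le_sqrt ?_
  have hf : 0 ≤ f A (p 1) := f_nonneg hA (p 1)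
  have hz : 0 ≤ (1 + f A (p 1)) * (v 2) ^ 2 := by positivity
  linarith [sq_nonneg (v 0)]

lemma abs_apply_two_mul_sqrt_le_gNorm (hA : 0 ≤ A) {y : ℝ} {p : E3} (hy : f A y ≤ f A (p 1))
    (v : E3) :
    |v 2| * √(1 + f A y) ≤ gNorm A p v := by
  refine le_sqrt_of_sq_le ?_
  calc (|v 2| * √(1 + f A y)) ^ 2
      = (1 + f A y) * (v 2) ^ 2 := by
        rw [mul_pow, sq_abs, sq_sqrt (by linarith [f_nonneg hA y]), mul_comm]
    _ ≤ (1 + f A (p 1)) * (v 2) ^ 2 := by gcongr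
    _ ≤ (v 0) ^ 2 + (v 1) ^ 2 + (1 + f A (p 1)) * (v 2) ^ 2 :=
        le_add_of_nonneg_left (by positivity)

lemma abs_apply_one_sub_le_integral_gNorm (hA : 0 ≤ A) (hγ : ContDiff ℝ 1 γ) {s t : ℝ}
    (hst : s ≤ t) :
    |γ t 1 - γ s 1| ≤ ∫ τ in s..t, gNorm A (γ τ) (deriv γ τ) :=
  norm_map_sub_le_integral_of_norm_map_deriv_le (EuclideanSpace.proj 1 : E3 →L[ℝ] ℝ)
    (hγ.differentiable one_ne_zero) hst ((continuous_gNorm_deriv A hγ).intervalIntegrable s t)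
    fun τ _ ↦ abs_apply_one_le_gNorm hA (γ τ) (deriv γ τ)

lemma two_mul_abs_apply_one_sub_le_Lg (hA : 0 ≤ A) (hγ : ContDiff ℝ 1 γ) {t : ℝ}
    (ht : t ∈ Set.Icc (0 : ℝ) 1) :
    2 * |γ t 1| - |γ 0 1| - |γ 1 1| ≤ Lg A γ := by
  have hint (s t : ℝ) : IntervalIntegrable (fun τ ↦ gNorm A (γ τ) (deriv γ τ)) volume s t :=
    (continuous_gNorm_deriv A hγ).intervalIntegrable s t
  calc 2 * |γ t 1| - |γ 0 1| - |γ 1 1|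
      ≤ |γ t 1 - γ 0 1| + |γ 1 1 - γ t 1| := by
        rw [abs_sub_comm (γ 1 1)]
        linarith [abs_sub_abs_le_abs_sub (γ t 1) (γ 0 1),
          abs_sub_abs_le_abs_sub (γ t 1) (γ 1 1)]
    _ ≤ (∫ τ in (0 : ℝ)..t, gNorm A (γ τ) (deriv γ τ)) +
          ∫ τ in t..(1 : ℝ), gNorm A (γ τ) (deriv γ τ) :=
        add_le_add (abs_apply_one_sub_le_integral_gNorm hA hγ ht.1)
          (abs_apply_one_sub_le_integral_gNorm hA hγ ht.2)
    _ = Lg A γ := by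
        rw [intervalIntegral.integral_add_adjacent_intervals (hint 0 t) (hint t 1),
          Lg_eq_integral_gNorm]

lemma abs_apply_two_sub_mul_sqrt_le_Lg (hA : 0 ≤ A) (hγ : ContDiff ℝ 1 γ) {y : ℝ} (hy : y ≤ 1)
    (hslab : ∀ t ∈ Set.Icc (0 : ℝ) 1, |γ t 1| ≤ y) :
    |γ 1 2 - γ 0 2| * √(1 + f A y) ≤ Lg A γ := by
  let ℓ : E3 →L[ℝ] ℝ := √(1 + f A y) • EuclideanSpace.proj 2
  have hℓ (v : E3) : ‖ℓ v‖ = |v 2| * √(1 + f A y) := by simp [ℓ, abs_of_nonneg, mul_comm]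
  have hspeed : ∀ t ∈ Set.Ioo (0 : ℝ) 1, ‖ℓ (deriv γ t)‖ ≤ gNorm A (γ t) (deriv γ t) := by
    intro t ht
    rw [hℓ]
    exact abs_apply_two_mul_sqrt_le_gNorm hA
      (f_le_f_of_abs_le_s4 hA (hslab t (Set.Ioo_subset_Icc_self ht)) hy) (deriv γ t)
  calc |γ 1 2 - γ 0 2| * √(1 + f A y)
      = ‖ℓ (γ 1) - ℓ (γ 0)‖ := by rw [← map_sub, hℓ, PiLp.sub_apply]
    _ ≤ Lg A γ :=
        norm_map_sub_le_integral_of_norm_map_deriv_le ℓ (hγ.differentiable one_ne_zero)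
          zero_le_one ((continuous_gNorm_deriv A hγ).intervalIntegrable 0 1) hspeed

lemma le_dg {c : ℝ} {p q : E3}
    (h : ∀ γ : ℝ → E3, ContDiff ℝ 1 γ → γ 0 = p → γ 1 = q → c ≤ Lg A γ) : c ≤ dg A p q := by
  refine le_csInf ⟨_, AffineMap.lineMap p q, AffineMap.contDiff_lineMap p q,
    AffineMap.lineMap_apply_zero p q, AffineMap.lineMap_apply_one p q, rfl⟩ ?_
  rintro _ ⟨γ, hγ, hp, hq, rfl⟩
  exact h γ hγ hp hq

theorem dg_uv_lower_bound_general (hA : 0 ≤ A) {y₀ : ℝ} (hy₀ : y₀ ≤ 1) (p q : E3) :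
    min (|q 2 - p 2| * √(1 + f A y₀)) (2 * y₀ - |p 1| - |q 1|) ≤ dg A p q := by
  refine le_dg ?_
  rintro γ hγ rfl rfl
  by_cases hslab : ∀ t ∈ Set.Icc (0 : ℝ) 1, |γ t 1| ≤ y₀
  · exact min_le_of_left_le (abs_apply_two_sub_mul_sqrt_le_Lg hA hγ hy₀ hslab)
  · push Not at hslab
    obtain ⟨t, ht, hlt⟩ := hslab
    exact min_le_of_right_le (by linarith [two_mul_abs_apply_one_sub_le_Lg hA hγ ht])

end

/-- `d_g(v, u) ≥ min(2aε√(1 + f(y₀)), 2y₀)`. -/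
theorem dg_uv_lower_bound (A : ℝ) (hA0 : 0 < A) (hA : A ≤ 3 / 8)
    (ε : ℝ) (hε : 0 < ε) (y₀ : ℝ) (hy₀ : 0 < y₀) (hy₀' : y₀ ≤ 1) :
    min (2 * a * ε * Real.sqrt (1 + f A y₀)) (2 * y₀)
      ≤ dg A (pt 0 0 (-(a * ε))) (pt 0 0 (a * ε)) := by
  have hz : 2 * a * ε ≤ |pt 0 0 (a * ε) 2 - pt 0 0 (-(a * ε)) 2| :=
    (show 2 * a * ε = a * ε - -(a * ε) by ring).trans_le (le_abs_self _)
  exact (min_le_min (mul_le_mul_of_nonneg_right hz (sqrt_nonneg _)) (by simp [pt])).trans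
    (dg_uv_lower_bound_general hA0.le hy₀' (pt 0 0 (-(a * ε))) (pt 0 0 (a * ε)))
end
end
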